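/- arXiv:math/0009241 — 2 statements merged into one kernel-verified Lean document; each statement's English description precedes it below -/
import Mathlib

section
/- Let G = (V,E) be a finite connected simple graph and fix a vertex i of G. Then the Möbius invariant μ(G) equals the number of acyclic orientations o of G such that for every vertex j there is a directed path in o from i to j. -/
open Finset

attribute [local instance] Classical.propDecidable
attribute [local instance] Fintype.toLocallyFiniteOrder

variable {V : Type*} [Fintype V]

noncomputable instance : Fintype (Setoid V) :=
  Fintype.ofInjective (fun s : Setoid V => s.r) fun s t h => by
    cases s; cases t; simp only at h; subst h; rfl

/-- The lattice `L(G)` of partitions of the vertex set of `G` (encoded as setoids, i.e.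
equivalence relations, ordered by refinement) all of whose blocks induce connected subgraphs. -/
def ConnPartition (G : SimpleGraph V) : Type _ :=
  {s : Setoid V // ∀ B ∈ s.classes, (G.induce B).Connected}

instance (G : SimpleGraph V) : PartialOrder (ConnPartition G) :=
  Subtype.partialOrder _

noncomputable instance (G : SimpleGraph V) : Fintype (ConnPartition G) :=
  Subtype.fintype _

/-- The Möbius invariant `μ(G)`: the absolute value of `μ(0̂, 1̂)` in the lattice of connected
partitions of `G`, where `0̂` is the partition into singletons and `1̂` the one-block partition
(defined to be `0` in the degenerate case where `0̂` or `1̂` does not lie in the lattice). -/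
noncomputable def mobiusInvariant (G : SimpleGraph V) : ℤ :=
  if h : (∀ B ∈ (⊥ : Setoid V).classes, (G.induce B).Connected) ∧
      (∀ B ∈ (⊤ : Setoid V).classes, (G.induce B).Connected) then
    |IncidenceAlgebra.mu ℤ (⟨⊥, h.1⟩ : ConnPartition G) ⟨⊤, h.2⟩|
  else 0

section Rooted

open Relation

variable {α : Type*}

/-- `v` is the root of its `π`-block with respect to the ranking `ρ`: it has the least rank. -/
def IsRoot (ρ : α → ℕ) (π : Setoid α) (v : α) : Prop :=
  ∀ w, π v w → ρ v ≤ ρ w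

/-- `o` is an acyclic orientation of the edges of `G` inside the blocks of `π`, such that every
vertex is reachable from the root of its block. -/
structure IsRootedOrientation (G : SimpleGraph α) (ρ : α → ℕ) (π : Setoid α)
    (o : α → α → Prop) : Prop where
  adj : ∀ {u v}, o u v → G.Adj u v
  rel : ∀ {u v}, o u v → π u v
  total : ∀ {u v}, G.Adj u v → π u v → (o u v ↔ ¬ o v u)
  acyclic : ∀ v, ¬ TransGen o v v
  reach : ∀ {u v}, IsRoot ρ π u → π u v → ReflTransGen o u v

/-- Split the blocks of `π` along the set `C`. -/
def Setoid.splitAlong (π : Setoid α) (C : Set α) : Setoid α where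
  r u v := π u v ∧ (u ∈ C ↔ v ∈ C)
  iseqv :=
    ⟨fun u => ⟨π.refl' u, Iff.rfl⟩, fun h => ⟨π.symm' h.1, h.2.symm⟩,
      fun h h' => ⟨π.trans' h.1 h'.1, h.2.trans h'.2⟩⟩

/-- Merge the blocks of `r` and `s` in `π`. -/
def Setoid.joinBlocks (π : Setoid α) (r s : α) : Setoid α where
  r u v := π u v ∨ ((π r u ∨ π s u) ∧ (π r v ∨ π s v))
  iseqv := by
    refine ⟨fun u => Or.inl (π.refl' u), ?_, ?_⟩
    · rintro u v (h | h)
      · exact Or.inl (π.symm' h)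
      · exact Or.inr ⟨h.2, h.1⟩
    · rintro u v w (h | h) (h' | h')
      · exact Or.inl (π.trans' h h')
      · exact Or.inr ⟨h'.1.imp (fun k => π.trans' k (π.symm' h)) fun k => π.trans' k (π.symm' h),
          h'.2⟩
      · exact Or.inr ⟨h.1, h.2.imp (fun k => π.trans' k h') fun k => π.trans' k h'⟩
      · exact Or.inr ⟨h.1, h'.2⟩

/-- The vertices reachable from `s` along `o`. -/
def reachSet (o : α → α → Prop) (s : α) : Set α := {v | ReflTransGen o s v}

/-- Cut off the vertices reachable from `s`. -/
def splitPair (s : α) (p : Setoid α × (α → α → Prop)) : Setoid α × (α → α → Prop) :=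
  (p.1.splitAlong (reachSet p.2 s),
    fun u v => p.2 u v ∧ (u ∈ reachSet p.2 s ↔ v ∈ reachSet p.2 s))

/-- Merge the blocks of `r` and `s`, orienting the edges between them towards the block of `s`. -/
def joinPair (G : SimpleGraph α) (r s : α) (p : Setoid α × (α → α → Prop)) :
    Setoid α × (α → α → Prop) :=
  (p.1.joinBlocks r s, fun u v => p.2 u v ∨ (p.1 r u ∧ p.1 s v ∧ G.Adj u v))

lemma splitAlong_le (π : Setoid α) (C : Set α) : π.splitAlong C ≤ π := fun _ _ h => h.1

lemma le_joinBlocks (π : Setoid α) (r s : α) : π ≤ π.joinBlocks r s := fun _ _ h => Or.inl h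

lemma joinBlocks_le {π σ : Setoid α} {r s : α} (h : π ≤ σ) (hrs : σ r s) :
    π.joinBlocks r s ≤ σ := by
  rintro u v (h' | ⟨hu, hv⟩)
  · exact h h'
  · have key : ∀ w, (π r w ∨ π s w) → σ r w := by
      rintro w (hw | hw)
      · exact h hw
      · exact σ.trans' hrs (h hw)
    exact σ.trans' (σ.symm' (key u hu)) (key v hv)

lemma IsRoot.mono {ρ : α → ℕ} {π π' : Setoid α} (h : π ≤ π') {v : α} (hv : IsRoot ρ π' v) :
    IsRoot ρ π v := fun w hw => hv w (h hw)

lemma IsRoot.eq {ρ : α → ℕ} (hρ : ρ.Injective) {π : Setoid α} {u v : α} (hu : IsRoot ρ π u)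
    (hv : IsRoot ρ π v) (huv : π u v) : u = v :=
  hρ (le_antisymm (hu v huv) (hv u (π.symm' huv)))

lemma exists_isRoot (ρ : α → ℕ) (π : Setoid α) (v : α) : ∃ r, π v r ∧ IsRoot ρ π r := by
  have hne : ({w | π v w} : Set α).Nonempty := ⟨v, π.refl' v⟩
  refine ⟨Function.argminOn ρ _ hne, Function.argminOn_mem ρ _ hne, fun w hw => ?_⟩
  exact Function.argminOn_le ρ _ (π.trans' (Function.argminOn_mem ρ _ hne) hw)

section Split

variable {G : SimpleGraph α} {ρ : α → ℕ} {π : Setoid α} {o : α → α → Prop} {r s : α}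

lemma self_mem_reachSet : s ∈ reachSet o s := ReflTransGen.refl

lemma mem_reachSet_of_rel {u v : α} (hu : u ∈ reachSet o s) (h : o u v) : v ∈ reachSet o s :=
  ReflTransGen.tail hu h

lemma IsRootedOrientation.rel_of_reflTransGen (h : IsRootedOrientation G ρ π o) {u v : α}
    (huv : ReflTransGen o u v) : π u v := by
  induction huv with
  | refl => exact π.refl' u
  | tail _ h' ih => exact π.trans' ih (h.rel h')

lemma IsRootedOrientation.root_notMem_reachSet (h : IsRootedOrientation G ρ π o)
    (hr : IsRoot ρ π r) (hrs : π r s) (hne : r ≠ s) : r ∉ reachSet o s := by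
  intro hmem
  have h1 := (reflTransGen_iff_eq_or_transGen.1 (h.reach hr hrs)).resolve_left hne.symm
  exact h.acyclic r (h1.trans_left hmem)

lemma IsRootedOrientation.isRoot_splitPair_iff (h : IsRootedOrientation G ρ π o)
    (hρ : ρ.Injective) (hr : IsRoot ρ π r) (hrs : π r s) (hne : r ≠ s)
    (hs : ∀ w, π r w → w ≠ r → ρ s ≤ ρ w) (v : α) :
    IsRoot ρ (splitPair s (π, o)).1 v ↔ IsRoot ρ π v ∨ v = s := by
  have hrC := h.root_notMem_reachSet hr hrs hne
  have hsub : ∀ w ∈ reachSet o s, π r w := fun w hw => π.trans' hrs (h.rel_of_reflTransGen hw)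
  constructor
  · intro hv
    by_cases hvr : π v r
    · by_cases hvC : v ∈ reachSet o s
      · right
        have h1 : ρ v ≤ ρ s := hv s ⟨π.trans' hvr hrs, iff_of_true hvC self_mem_reachSet⟩
        have h2 : ρ s ≤ ρ v := hs v (π.symm' hvr) (by rintro rfl; exact hrC hvC)
        exact hρ (le_antisymm h1 h2)
      · left
        have h1 : ρ v ≤ ρ r := hv r ⟨hvr, iff_of_false hvC hrC⟩
        have h2 : ρ r ≤ ρ v := hr v (π.symm' hvr)
        rw [hρ (le_antisymm h1 h2)]
        exact hr
    · left
      intro w hw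
      refine hv w ⟨hw, iff_of_false (fun hC => hvr (π.symm' (hsub v hC))) fun hC => hvr ?_⟩
      exact π.trans' hw (π.symm' (hsub w hC))
  · rintro (hv | rfl)
    · exact hv.mono (splitAlong_le _ _)
    · rintro w ⟨hw, hC⟩
      refine hs w (π.trans' hrs hw) ?_
      rintro rfl
      exact hrC (hC.1 self_mem_reachSet)

lemma IsRootedOrientation.splitPair (h : IsRootedOrientation G ρ π o)
    (hρ : ρ.Injective) (hr : IsRoot ρ π r) (hrs : π r s) (hne : r ≠ s)
    (hs : ∀ w, π r w → w ≠ r → ρ s ≤ ρ w) :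
    IsRootedOrientation G ρ (splitPair s (π, o)).1 (splitPair s (π, o)).2 where
  adj h' := h.adj h'.1
  rel h' := ⟨h.rel h'.1, h'.2⟩
  total {u v} ha hπ := by
    have := h.total ha hπ.1
    have := hπ.2
    simp only [_root_.splitPair]
    tauto
  acyclic v hv := h.acyclic v (TransGen.mono (fun _ _ h' => h'.1) _ _ hv)
  reach {u v} hu huv := by
    have hrC := h.root_notMem_reachSet hr hrs hne
    obtain ⟨hπ, hC⟩ := huv
    rcases (h.isRoot_splitPair_iff hρ hr hrs hne hs u).1 hu with hu | rfl
    · have huC : u ∉ reachSet o s := by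
        intro huC
        have hsu := h.rel_of_reflTransGen huC
        have := hr.eq hρ hu (π.trans' hrs hsu)
        exact hrC (this ▸ huC)
      have key : ∀ w, ReflTransGen o u w → w ∉ reachSet o s →
          ReflTransGen (_root_.splitPair s (π, o)).2 u w := by
        intro w hw
        induction hw with
        | refl => exact fun _ => ReflTransGen.refl
        | tail _ h' ih =>
          intro hC
          have hC' := fun k => hC (mem_reachSet_of_rel k h')
          exact (ih hC').tail ⟨h', iff_of_false hC' hC⟩
      exact key v (h.reach hu hπ) (fun k => huC (hC.2 k))
    · have hv : ReflTransGen o u v := hC.1 self_mem_reachSet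
      clear hC hπ
      induction hv with
      | refl => exact ReflTransGen.refl
      | tail h1 h' ih => exact ih.tail ⟨h', iff_of_true h1 (h1.tail h')⟩

lemma IsRootedOrientation.not_splitPair_apply (h : IsRootedOrientation G ρ π o)
    (hr : IsRoot ρ π r) (hrs : π r s) (hne : r ≠ s) : ¬ (_root_.splitPair s (π, o)).1 r s :=
  fun h' => h.root_notMem_reachSet hr hrs hne (h'.2.2 self_mem_reachSet)

lemma IsRootedOrientation.joinPair (h : IsRootedOrientation G ρ π o) (hρ : ρ.Injective)
    (hr : IsRoot ρ π r) (hs : IsRoot ρ π s) (hrs : ¬ π r s) (hadj : G.Adj r s)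
    (hlt : ρ r < ρ s) :
    IsRootedOrientation G ρ (joinPair G r s (π, o)).1 (joinPair G r s (π, o)).2 where
  adj h' := h'.elim h.adj fun k => k.2.2
  rel h' := h'.elim (fun k => Or.inl (h.rel k)) fun k => Or.inr ⟨Or.inl k.1, Or.inr k.2.1⟩
  total {u v} ha hπ := by
    have key : ∀ w, π r w → π s w → False := fun w h1 h2 => hrs (π.trans' h1 (π.symm' h2))
    have huv : π r u → (π u v ↔ π r v) := fun k => ⟨π.trans' k, π.trans' (π.symm' k)⟩
    have huv' : π s u → (π u v ↔ π s v) := fun k => ⟨π.trans' k, π.trans' (π.symm' k)⟩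
    have h1 := h.total ha
    have h2 : o u v → π u v := h.rel
    have h3 : o v u → π u v := fun k => π.symm' (h.rel k)
    have h4 := ha.symm
    have h5 := key u
    have h6 := key v
    change π u v ∨ ((π r u ∨ π s u) ∧ (π r v ∨ π s v)) at hπ
    change (o u v ∨ _) ↔ ¬ (o v u ∨ _)
    clear key h hs hr hρ
    by_cases a1 : π r u <;> by_cases a2 : π s u <;> by_cases a3 : π r v <;>
      by_cases a4 : π s v <;> by_cases a5 : π u v <;> simp_all
  acyclic v hv := by
    have key : ∀ w, π r w → π s w → False := fun w h1 h2 => hrs (π.trans' h1 (π.symm' h2))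
    by_cases hsv : π s v
    · have : ∀ w, TransGen (_root_.joinPair G r s (π, o)).2 v w → TransGen o v w ∧ π s w := by
        intro w hw
        induction hw with
        | single h' =>
          rcases h' with h' | h'
          · exact ⟨.single h', π.trans' hsv (h.rel h')⟩
          · exact (key _ h'.1 hsv).elim
        | tail _ h' ih =>
          rcases h' with h' | h'
          · exact ⟨ih.1.tail h', π.trans' ih.2 (h.rel h')⟩
          · exact (key _ h'.1 ih.2).elim
      exact h.acyclic v (this v hv).1
    · have : ∀ w, TransGen (_root_.joinPair G r s (π, o)).2 v w → ¬ π s w → TransGen o v w := by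
        intro w hw
        induction hw with
        | single h' =>
          rcases h' with h' | h'
          · exact fun _ => .single h'
          · exact fun k => (k h'.2.1).elim
        | tail _ h' ih =>
          rcases h' with h' | h'
          · exact fun k => (ih fun k' => k (π.trans' k' (h.rel h'))).tail h'
          · exact fun k => (k h'.2.1).elim
      exact h.acyclic v (this v hv hsv)
  reach {u v} hu huv := by
    have hmono : ∀ {a b}, ReflTransGen o a b →
        ReflTransGen (_root_.joinPair G r s (π, o)).2 a b :=
      fun k => ReflTransGen.mono (fun _ _ => Or.inl) _ _ k
    have hu' : IsRoot ρ π u := hu.mono (le_joinBlocks π r s)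
    rcases huv with huv | ⟨h1, h2⟩
    · exact hmono (h.reach hu' huv)
    · rcases h1 with h1 | h1
      · obtain rfl := hr.eq hρ hu' h1
        rcases h2 with h2 | h2
        · exact hmono (h.reach hr h2)
        · refine ReflTransGen.head (b := s) (Or.inr ⟨π.refl' _, π.refl' _, hadj⟩) ?_
          exact hmono (h.reach hs h2)
      · obtain rfl := hs.eq hρ hu' h1
        have := hu r (Or.inr ⟨Or.inr (π.refl' _), Or.inl (π.refl' _)⟩)
        omega

lemma joinPair_apply : (joinPair G r s (π, o)).1 r s :=
  Or.inr ⟨Or.inl (π.refl' r), Or.inr (π.refl' s)⟩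

lemma IsRootedOrientation.joinPair_splitPair (h : IsRootedOrientation G ρ π o)
    (hr : IsRoot ρ π r) (hrs : π r s) (hne : r ≠ s) :
    _root_.joinPair G r s (_root_.splitPair s (π, o)) = (π, o) := by
  have hrC := h.root_notMem_reachSet hr hrs hne
  have hsub : ∀ w ∈ reachSet o s, π s w := fun w hw => h.rel_of_reflTransGen hw
  refine Prod.ext (le_antisymm ?_ ?_) ?_
  · exact joinBlocks_le (splitAlong_le _ _) hrs
  · intro u v huv
    by_cases hC : u ∈ reachSet o s ↔ v ∈ reachSet o s
    · exact Or.inl ⟨huv, hC⟩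
    · have hru : π r u := by
        by_cases hu : u ∈ reachSet o s
        · exact π.trans' hrs (hsub u hu)
        · have hv : v ∈ reachSet o s := by tauto
          exact π.trans' (π.trans' hrs (hsub v hv)) (π.symm' huv)
      have key : ∀ w, π r w →
          π.splitAlong (reachSet o s) r w ∨ π.splitAlong (reachSet o s) s w := by
        intro w hw
        by_cases hwC : w ∈ reachSet o s
        · exact Or.inr ⟨hsub w hwC, iff_of_true self_mem_reachSet hwC⟩
        · exact Or.inl ⟨hw, iff_of_false hrC hwC⟩
      exact Or.inr ⟨key u hru, key v (π.trans' hru huv)⟩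
  · funext u v
    apply propext
    constructor
    · rintro (h' | ⟨h1, h2, ha⟩)
      · exact h'.1
      · have hu : u ∉ reachSet o s := fun k => hrC (h1.2.2 k)
        have hv : v ∈ reachSet o s := h2.2.1 self_mem_reachSet
        have huv : π u v := π.trans' (π.symm' h1.1) (π.trans' hrs h2.1)
        exact (h.total ha huv).2 fun k => hu (mem_reachSet_of_rel hv k)
    · intro h'
      by_cases hC : u ∈ reachSet o s ↔ v ∈ reachSet o s
      · exact Or.inl ⟨h', hC⟩
      · have hu : u ∉ reachSet o s := fun k => hC (iff_of_true k (mem_reachSet_of_rel k h'))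
        have hv : v ∈ reachSet o s := by tauto
        refine Or.inr ⟨⟨?_, iff_of_false hrC hu⟩, ⟨hsub v hv, iff_of_true self_mem_reachSet hv⟩,
          h.adj h'⟩
        exact π.trans' hrs (π.trans' (hsub v hv) (π.symm' (h.rel h')))

lemma IsRootedOrientation.splitPair_joinPair (h : IsRootedOrientation G ρ π o)
    (hs : IsRoot ρ π s) (hrs : ¬ π r s) :
    _root_.splitPair s (_root_.joinPair G r s (π, o)) = (π, o) := by
  have key : ∀ w, π r w → π s w → False := fun w h1 h2 => hrs (π.trans' h1 (π.symm' h2))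
  have hC : ∀ w, w ∈ reachSet (_root_.joinPair G r s (π, o)).2 s ↔ π s w := by
    intro w
    constructor
    · intro hw
      induction hw with
      | refl => exact π.refl' s
      | tail _ h' ih =>
        rcases h' with h' | h'
        · exact π.trans' ih (h.rel h')
        · exact h'.2.1
    · exact fun hw => ReflTransGen.mono (fun _ _ => Or.inl) _ _ (h.reach hs hw)
  have hiff : ∀ {u v}, π u v → (π s u ↔ π s v) := fun k =>
    ⟨fun k' => π.trans' k' k, fun k' => π.trans' k' (π.symm' k)⟩
  refine Prod.ext (le_antisymm ?_ ?_) ?_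
  · rintro u v ⟨h1 | ⟨h1, h2⟩, h3⟩
    · exact h1
    · rw [hC, hC] at h3
      by_cases hu : π s u
      · exact π.trans' (π.symm' hu) (h3.1 hu)
      · exact π.trans' (π.symm' (h1.resolve_right hu)) (h2.resolve_right (mt h3.2 hu))
  · intro u v huv
    exact ⟨Or.inl huv, by rw [hC, hC]; exact hiff huv⟩
  · funext u v
    apply propext
    constructor
    · rintro ⟨h1 | h1, h3⟩
      · exact h1
      · rw [hC, hC] at h3
        exact (key u h1.1 (h3.2 h1.2.1)).elim
    · intro h'
      exact ⟨Or.inl h', by rw [hC, hC]; exact hiff (h.rel h')⟩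

end Split

section Ranking

variable {G : SimpleGraph α} {ρ : α → ℕ} {r s : α}

lemma isRootedOrientation_congr {ρ' : α → ℕ} {π : Setoid α}
    (h : ∀ v, IsRoot ρ π v ↔ IsRoot ρ' π v) (o : α → α → Prop) :
    IsRootedOrientation G ρ π o ↔ IsRootedOrientation G ρ' π o :=
  ⟨fun k => ⟨k.adj, k.rel, k.total, k.acyclic, fun hu => k.reach ((h _).2 hu)⟩,
    fun k => ⟨k.adj, k.rel, k.total, k.acyclic, fun hu => k.reach ((h _).1 hu)⟩⟩

lemma IsRootedOrientation.induce_connected {π : Setoid α} {o : α → α → Prop}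
    (h : IsRootedOrientation G ρ π o) : ∀ B ∈ π.classes, (G.induce B).Connected := by
  rintro B ⟨y, rfl⟩
  obtain ⟨r, hyr, hr⟩ := exists_isRoot ρ π y
  have key : ∀ w, ReflTransGen o r w → ∀ hw : π w y,
      (G.induce {x | π x y}).Reachable ⟨r, π.symm' hyr⟩ ⟨w, hw⟩ := by
    intro w hw
    induction hw with
    | refl => exact fun _ => SimpleGraph.Reachable.refl _
    | tail _ h' ih =>
      intro hw
      refine (ih (π.trans' (h.rel h') hw)).trans (SimpleGraph.Adj.reachable ?_)
      exact h.adj h'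
  rw [SimpleGraph.connected_iff_exists_forall_reachable]
  refine ⟨⟨r, π.symm' hyr⟩, fun ⟨w, hw⟩ => key w (h.reach hr ?_) hw⟩
  exact π.trans' (π.symm' hyr) (π.symm' hw)

/-- The ranking obtained from `ρ` by moving `s` to the position just after `r`. -/
noncomputable def moveAfter (ρ : α → ℕ) (r s v : α) : ℕ :=
  if v = s then 2 * ρ r + 1 else 2 * ρ v

lemma moveAfter_injective (hρ : ρ.Injective) : (moveAfter ρ r s).Injective := by
  intro u v h
  unfold moveAfter at h
  split_ifs at h with h1 h2 h2
  · rw [h1, h2]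
  · omega
  · omega
  · exact hρ (by omega)

lemma isRoot_moveAfter_iff {σ : Setoid α} (hρ : ρ.Injective) (hr : IsRoot ρ σ r) (hrs : σ r s)
    (hne : r ≠ s) (v : α) : IsRoot ρ σ v ↔ IsRoot (moveAfter ρ r s) σ v := by
  have hlt : ρ r < ρ s := lt_of_le_of_ne (hr s hrs) fun h => hne (hρ h)
  constructor
  · intro hv w hw
    have hvs : v ≠ s := by
      rintro rfl
      have := hv r (σ.symm' hrs)
      omega
    have h1 := hv w hw
    unfold moveAfter
    rw [if_neg hvs]
    split_ifs with hws
    · subst hws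
      have := hv r (σ.trans' hw (σ.symm' hrs))
      omega
    · omega
  · intro hv w hw
    have hvs : v ≠ s := by
      rintro rfl
      have := hv r (σ.symm' hrs)
      simp only [moveAfter, if_true, if_neg hne] at this
      omega
    have h1 := hv w hw
    unfold moveAfter at h1
    rw [if_neg hvs] at h1
    split_ifs at h1 with hws
    · subst hws
      omega
    · omega

end Ranking

end Rooted

section SignedCount

open Relation

/-- The sign `(-1) ^ (|V| - |π|)`. -/
noncomputable def rootSign (ρ : V → ℕ) (π : Setoid V) : ℤ :=
  (-1) ^ #{v | ¬ IsRoot ρ π v}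

/-- The number of rooted orientations of `π`, with the sign of `π`. -/
noncomputable def signedCount (G : SimpleGraph V) (ρ : V → ℕ) (π : Setoid V) : ℤ :=
  rootSign ρ π * Nat.card {o : V → V → Prop // IsRootedOrientation G ρ π o}

variable {G : SimpleGraph V} {ρ : V → ℕ} {r s : V}

lemma IsRootedOrientation.rootSign_splitPair {π : Setoid V} {o : V → V → Prop}
    (h : IsRootedOrientation G ρ π o) (hρ : ρ.Injective) (hr : IsRoot ρ π r) (hrs : π r s)
    (hne : r ≠ s) (hs : ∀ w, π r w → w ≠ r → ρ s ≤ ρ w) :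
    rootSign ρ π = - rootSign ρ (_root_.splitPair s (π, o)).1 := by
  have hs' : ¬ IsRoot ρ π s := fun hs' => hne (hr.eq hρ hs' hrs)
  have : ({v | ¬ IsRoot ρ π v} : Finset V) =
      insert s ({v | ¬ IsRoot ρ (_root_.splitPair s (π, o)).1 v} : Finset V) := by
    ext v
    simp only [mem_filter, mem_univ, true_and, mem_insert,
      h.isRoot_splitPair_iff hρ hr hrs hne hs]
    by_cases hv : v = s
    · simp [hv, hs']
    · simp [hv]
  rw [rootSign, rootSign, this, card_insert_of_notMem, pow_succ]
  · ring
  · simp [h.isRoot_splitPair_iff hρ hr hrs hne hs]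

/-- Detach the block of `s` from the block of `r`, or attach it. -/
noncomputable def togglePair (G : SimpleGraph V) (r s : V) (p : Setoid V × (V → V → Prop)) :
    Setoid V × (V → V → Prop) :=
  if p.1 r s then splitPair s p else joinPair G r s p

lemma sum_signedCount_eq_zero {σ : Setoid V} (hρ : ρ.Injective) (hr : IsRoot ρ σ r)
    (hrs : σ r s) (hadj : G.Adj r s) (hs : ∀ w, σ r w → w ≠ r → ρ s ≤ ρ w) :
    ∑ π with π ≤ σ, signedCount G ρ π = 0 := by
  have hne : r ≠ s := hadj.ne
  have hlt : ρ r < ρ s := lt_of_le_of_ne (hr s hrs) fun h => hne (hρ h)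
  have hsum : ∑ π with π ≤ σ, signedCount G ρ π =
      ∑ p : Setoid V × (V → V → Prop) with p.1 ≤ σ ∧ IsRootedOrientation G ρ p.1 p.2,
        rootSign ρ p.1 := by
    rw [sum_filter, sum_filter, Fintype.sum_prod_type]
    refine sum_congr rfl fun π _ => ?_
    by_cases hπ : π ≤ σ
    · simp only [hπ, true_and, if_true, signedCount]
      rw [← sum_filter, sum_const, Nat.card_eq_fintype_card, Fintype.card_subtype]
      simp [mul_comm]
    · simp [hπ]
  have hsπ : ∀ {π : Setoid V}, π ≤ σ → ¬ π r s → IsRoot ρ π s := by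
    intro π hπ hn w hw
    refine hs w (σ.trans' hrs (hπ hw)) ?_
    rintro rfl
    exact hn (π.symm' hw)
  have hsw : ∀ {π : Setoid V}, π ≤ σ → ∀ w, π r w → w ≠ r → ρ s ≤ ρ w :=
    fun hπ w hw => hs w (hπ hw)
  rw [hsum]
  refine sum_involution (fun p _ => togglePair G r s p) ?_ ?_ ?_ ?_
  · rintro ⟨π, o⟩ hp
    obtain ⟨hπ, h⟩ : π ≤ σ ∧ IsRootedOrientation G ρ π o := by simpa using hp
    by_cases hc : π r s
    · simp only [togglePair, hc, if_true]
      rw [h.rootSign_splitPair hρ (hr.mono hπ) hc hne (hsw hπ), neg_add_cancel]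
    · simp only [togglePair, hc, if_false]
      have h' := h.joinPair hρ (hr.mono hπ) (hsπ hπ hc) hc hadj hlt
      have hle : (joinPair G r s (π, o)).1 ≤ σ := joinBlocks_le hπ hrs
      rw [h'.rootSign_splitPair hρ (hr.mono hle) joinPair_apply hne (hsw hle), Prod.mk.eta,
        h.splitPair_joinPair (hsπ hπ hc) hc, add_neg_cancel]
  · rintro ⟨π, o⟩ hp _ heq
    obtain ⟨hπ, h⟩ : π ≤ σ ∧ IsRootedOrientation G ρ π o := by simpa using hp
    by_cases hc : π r s
    · simp only [togglePair, hc, if_true] at heq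
      have := h.not_splitPair_apply (hr.mono hπ) hc hne
      rw [heq] at this
      exact this hc
    · simp only [togglePair, hc, if_false] at heq
      have : (joinPair G r s (π, o)).1 r s := joinPair_apply
      rw [heq] at this
      exact hc this
  · rintro ⟨π, o⟩ hp
    obtain ⟨hπ, h⟩ : π ≤ σ ∧ IsRootedOrientation G ρ π o := by simpa using hp
    simp only [mem_filter, mem_univ, true_and]
    by_cases hc : π r s
    · simp only [togglePair, hc, if_true]
      exact ⟨(splitAlong_le _ _).trans hπ, h.splitPair hρ (hr.mono hπ) hc hne (hsw hπ)⟩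
    · simp only [togglePair, hc, if_false]
      exact ⟨joinBlocks_le hπ hrs, h.joinPair hρ (hr.mono hπ) (hsπ hπ hc) hc hadj hlt⟩
  · rintro ⟨π, o⟩ hp
    obtain ⟨hπ, h⟩ : π ≤ σ ∧ IsRootedOrientation G ρ π o := by simpa using hp
    by_cases hc : π r s
    · have := h.not_splitPair_apply (hr.mono hπ) hc hne
      have heq : togglePair G r s (π, o) = splitPair s (π, o) := if_pos hc
      rw [heq, togglePair, if_neg this]
      exact h.joinPair_splitPair (hr.mono hπ) hc hne
    · have : (joinPair G r s (π, o)).1 r s := joinPair_apply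
      have heq : togglePair G r s (π, o) = joinPair G r s (π, o) := if_neg hc
      rw [heq, togglePair, if_pos this]
      exact h.splitPair_joinPair (hsπ hπ hc) hc

lemma signedCount_congr {ρ' : V → ℕ} {π : Setoid V}
    (h : ∀ v, IsRoot ρ π v ↔ IsRoot ρ' π v) : signedCount G ρ π = signedCount G ρ' π := by
  simp only [signedCount, rootSign, h, isRootedOrientation_congr h]

lemma signedCount_eq_zero {π : Setoid V}
    (hπ : ¬ ∀ B ∈ π.classes, (G.induce B).Connected) : signedCount G ρ π = 0 := by
  have : IsEmpty {o : V → V → Prop // IsRootedOrientation G ρ π o} :=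
    ⟨fun o => hπ o.2.induce_connected⟩
  simp [signedCount]

lemma signedCount_bot : signedCount G ρ ⊥ = 1 := by
  have hroot : ∀ v, IsRoot ρ ⊥ v := by
    rintro v w rfl
    exact le_rfl
  have : Unique {o : V → V → Prop // IsRootedOrientation G ρ ⊥ o} :=
    { default := ⟨fun _ _ => False,
        { adj := fun h => h.elim
          rel := fun h => h.elim
          total := by
            rintro u v ha rfl
            exact (ha.ne rfl).elim
          acyclic := by
            intro v hv
            cases hv <;> assumption
          reach := by
            rintro u v _ rfl
            exact .refl }⟩
      uniq := by
        rintro ⟨o, ho⟩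
        apply Subtype.ext
        funext u v
        apply propext
        refine ⟨fun h => ?_, fun h => h.elim⟩
        exact (ho.adj h).ne (ho.rel h) }
  simp [signedCount, rootSign, hroot]

lemma exists_root_adj {σ : Setoid V} (hσ : ∀ B ∈ σ.classes, (G.induce B).Connected)
    (hne : σ ≠ ⊥) (ρ : V → ℕ) : ∃ r s, IsRoot ρ σ r ∧ σ r s ∧ G.Adj r s := by
  obtain ⟨a, b, hab, hne⟩ : ∃ a b, σ a b ∧ a ≠ b := by
    by_contra! hcon
    exact hne (eq_bot_iff.2 fun a b h => hcon a b h)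
  obtain ⟨r, har, hr⟩ := exists_isRoot ρ σ a
  have hc := hσ _ (σ.mem_classes r)
  have : Nontrivial ({x | σ x r} : Set V) :=
    ⟨⟨a, har⟩, ⟨b, σ.trans' (σ.symm' hab) har⟩, fun h => hne (congrArg Subtype.val h)⟩
  obtain ⟨⟨s, hs⟩, hadj⟩ := hc.preconnected.exists_adj_of_nontrivial ⟨r, σ.refl' r⟩
  exact ⟨r, s, hr, σ.symm' hs, hadj⟩

lemma sum_connPartition (f : Setoid V → ℤ) (σ : ConnPartition G)
    (hf : ∀ π : Setoid V, (¬ ∀ B ∈ π.classes, (G.induce B).Connected) → f π = 0) :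
    ∑ π : ConnPartition G with π ≤ σ, f π.1 = ∑ π with π ≤ σ.1, f π := by
  refine sum_bij_ne_zero (fun π _ _ => π.1) ?_ ?_ ?_ ?_
  · intro π hπ _
    exact mem_filter.2 ⟨mem_univ _, (mem_filter.1 hπ).2⟩
  · intro π _ _ π' _ _ h
    exact Subtype.ext h
  · intro π hπ hne
    have hc : ∀ B ∈ π.classes, (G.induce B).Connected := by
      by_contra hc
      exact hne (hf π hc)
    exact ⟨⟨π, hc⟩, mem_filter.2 ⟨mem_univ _, (mem_filter.1 hπ).2⟩, hne, rfl⟩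
  · intros
    rfl

theorem mu_eq_signedCount [LocallyFiniteOrder (ConnPartition G)]
    [DecidableEq (ConnPartition G)] {b : ConnPartition G} (hb : b.1 = ⊥) (σ : ConnPartition G)
    (hρ : ρ.Injective) :
    IncidenceAlgebra.mu ℤ b σ = signedCount G ρ σ.1 := by
  induction σ using WellFoundedLT.induction generalizing ρ with
  | ind σ ih =>
    by_cases hσ : b = σ
    · subst hσ
      rw [IncidenceAlgebra.mu_self, hb, signedCount_bot]
    have hσ' : σ.1 ≠ ⊥ := fun h => hσ (Subtype.ext (hb.trans h.symm))
    obtain ⟨r, s, hr, hrs, hadj⟩ := exists_root_adj σ.2 hσ' ρ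
    have hroot := isRoot_moveAfter_iff hρ hr hrs hadj.ne
    have hρ' : (moveAfter ρ r s).Injective := moveAfter_injective hρ
    have hzero : ∑ π with π ≤ σ.1, signedCount G (moveAfter ρ r s) π = 0 := by
      refine sum_signedCount_eq_zero hρ' ((hroot r).1 hr) hrs hadj fun w hw hwr => ?_
      have h1 := hr w hw
      have h2 : ρ r ≠ ρ w := fun h => hwr (hρ h).symm
      unfold moveAfter
      rw [if_pos rfl]
      split_ifs
      · exact le_rfl
      · omega
    rw [← sum_connPartition _ σ fun π hπ => signedCount_eq_zero hπ] at hzero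
    have hfilter : ({π | π ≤ σ} : Finset (ConnPartition G)) =
        insert σ (Ico b σ) := by
      ext π
      have : b ≤ π := show b.1 ≤ π.1 from hb ▸ bot_le
      simp [this, le_iff_eq_or_lt]
    rw [hfilter, sum_insert (by simp), ← signedCount_congr hroot] at hzero
    rw [IncidenceAlgebra.mu_eq_neg_sum_Ico_of_ne hσ,
      sum_congr rfl fun π hπ => ih π (mem_Ico.1 hπ).2 hρ']
    linarith

end SignedCount

/-- for a finite connected simple graph `G` and a fixed vertex `i`, the Möbius
invariant `μ(G)` equals the number of acyclic orientations of `G` in which every vertex is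
reachable from `i` by a directed path. -/
theorem mobiusInvariant_eq_card_acyclic_orientations (G : SimpleGraph V) (hG : G.Connected)
    (i : V) :
    mobiusInvariant G =
      (Nat.card {o : V → V → Prop //
        (∀ u v, o u v → G.Adj u v) ∧
        (∀ u v, G.Adj u v → (o u v ↔ ¬ o v u)) ∧
        (∀ v, ¬ Relation.TransGen o v v) ∧
        (∀ j, Relation.ReflTransGen o i j)} : ℤ) := by
  have hbot : ∀ B ∈ (⊥ : Setoid V).classes, (G.induce B).Connected := by
    rintro B ⟨y, rfl⟩
    rw [SimpleGraph.connected_iff_exists_forall_reachable]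
    refine ⟨⟨y, rfl⟩, ?_⟩
    rintro ⟨w, rfl⟩
    exact .refl _
  have htop : ∀ B ∈ (⊤ : Setoid V).classes, (G.induce B).Connected := by
    rintro B ⟨y, rfl⟩
    exact (SimpleGraph.induceUnivIso G).connected_iff.2 hG
  obtain ⟨ρ, hρ, hi⟩ : ∃ ρ : V → ℕ, ρ.Injective ∧ ∀ v, ρ i ≤ ρ v := by
    refine ⟨fun v => if v = i then 0 else Fintype.equivFin V v + 1, fun u v h => ?_, by simp⟩
    dsimp only at h
    split_ifs at h with h1 h2 h2
    · rw [h1, h2]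
    · exact (Fintype.equivFin V).injective (Fin.ext (by omega))
  have hroot : ∀ v, IsRoot ρ ⊤ v ↔ v = i := by
    intro v
    constructor
    · exact fun h => hρ (le_antisymm (h i trivial) (hi v))
    · rintro rfl w _
      exact hi w
  have hmu := fun i₁ i₂ =>
    congrArg abs (@mu_eq_signedCount V _ G ρ i₁ i₂ ⟨⊥, hbot⟩ rfl ⟨⊤, htop⟩ hρ)
  rw [mobiusInvariant, dif_pos ⟨hbot, htop⟩]
  refine (hmu _ _).trans ?_
  rw [signedCount, rootSign, abs_mul, abs_neg_one_pow, one_mul, Nat.abs_cast]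
  congr 1
  refine Nat.card_congr (Equiv.subtypeEquivRight fun o => ?_)
  constructor
  · intro h
    exact ⟨fun u v => h.adj, fun u v ha => h.total ha trivial, h.acyclic,
      fun j => h.reach ((hroot i).2 rfl) trivial⟩
  · rintro ⟨h1, h2, h3, h4⟩
    exact ⟨fun h => h1 _ _ h, fun _ => trivial, fun ha _ => h2 _ _ ha, h3,
      fun {u v} hu _ => (hroot u).1 hu ▸ h4 v⟩
end

section
/- Let G = (V,E) be a finite connected simple graph with d vertices. Consider the linear orderings v_1 v_2 ⋯ v_d of V (bijections {1,…,d} → V), and let ~ be the equivalence relation on them generated by the two operations: (i) exchanging two consecutive vertices v_j, v_{j+1} when {v_j, v_{j+1}} is not an edge of G, and (ii) cyclically shifting the entire ordering, v_1 v_2 ⋯ v_d ↦ v_2 ⋯ v_d v_1. Then the Möbius invariant μ(G) equals the number of equivalence classes of linear orderings of V under ~. -/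
open Finset

attribute [local instance] Classical.propDecidable
attribute [local instance] Fintype.toLocallyFiniteOrder

variable {V : Type*} [Fintype V]

/-- The one-step relation on linear orderings of the vertices (bijections `Fin d ≃ V`):
(i) exchange two consecutive vertices that are not adjacent in `G`, or
(ii) cyclically shift the whole ordering. -/
def orderingStep (G : SimpleGraph V) (σ τ : Fin (Fintype.card V) ≃ V) : Prop :=
  (∃ (j : Fin (Fintype.card V)) (hj : (j : ℕ) + 1 < Fintype.card V),
      ¬ G.Adj (σ j) (σ ⟨(j : ℕ) + 1, hj⟩) ∧
      τ = (Equiv.swap j ⟨(j : ℕ) + 1, hj⟩).trans σ) ∨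
    τ = (finRotate (Fintype.card V)).trans σ


set_option linter.unusedSectionVars false

/-- `O` is an acyclic orientation of the edges of `G` lying inside the blocks of `s`, and its set
of sources (isolated vertices included) is `R`. -/
structure IsAcyclicOrientation (G : SimpleGraph V) (s : Setoid V) (R : Finset V)
    (O : V → V → Prop) : Prop where
  adj_iff : ∀ a b, O a b ∨ O b a ↔ G.Adj a b ∧ s a b
  acyclic : ∀ a, ¬ Relation.TransGen O a a
  mem_iff : ∀ x, x ∈ R ↔ ∀ y, ¬ O y x

/-- The set of acyclic orientations of `G` inside the blocks of `s` with source set `R`. -/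
noncomputable def acyclicOrientations (G : SimpleGraph V) (s : Setoid V) (R : Finset V) :
    Finset (V → V → Prop) :=
  univ.filter (IsAcyclicOrientation G s R)

/-- `R` contains exactly one element of every block of `s`. -/
structure IsTransversal (s : Setoid V) (R : Finset V) : Prop where
  exists_mem : ∀ x, ∃ r ∈ R, s r x
  eq_of_rel : ∀ r ∈ R, ∀ t ∈ R, s r t → r = t

/-- The setoid obtained by merging the blocks of `u` and `v`. -/
def mergeSetoid (s : Setoid V) (u v : V) : Setoid V where
  r x y := s x y ∨ (s x u ∧ s y v) ∨ (s x v ∧ s y u)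
  iseqv := by
    have hs := fun x y => @Setoid.symm' _ s x y
    have ht := fun x y z => @Setoid.trans' _ s x y z
    refine ⟨fun x => Or.inl (s.refl' x), ?_, ?_⟩
    · rintro x y (h | h | h)
      · exact Or.inl (hs _ _ h)
      · exact Or.inr (Or.inr h.symm)
      · exact Or.inr (Or.inl h.symm)
    · grind

/-- The setoid obtained by splitting the blocks of `s` according to whether their elements can be
reached from `v` along `O`. -/
def splitSetoid (s : Setoid V) (O : V → V → Prop) (v : V) : Setoid V :=
  s ⊓ Setoid.ker (Relation.ReflTransGen O v)

lemma mergeSetoid_apply {s : Setoid V} {u v x y : V} :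
    mergeSetoid s u v x y ↔ s x y ∨ (s x u ∧ s y v) ∨ (s x v ∧ s y u) := Iff.rfl

lemma splitSetoid_apply {s : Setoid V} {O : V → V → Prop} {v x y : V} :
    splitSetoid s O v x y ↔
      s x y ∧ (Relation.ReflTransGen O v x ↔ Relation.ReflTransGen O v y) := by
  rw [splitSetoid, Setoid.inf_iff_and, Setoid.ker_def, eq_iff_iff]

lemma conn_iff {G : SimpleGraph V} {s : Setoid V} :
    (∀ B ∈ s.classes, (G.induce B).Connected) ↔
      ∀ x y, s x y → Relation.ReflTransGen (fun a b => G.Adj a b ∧ s a b) x y := by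
  constructor
  · intro h x y hxy
    have hB := (h _ (s.mem_classes y)).preconnected ⟨x, hxy⟩ ⟨y, s.refl' y⟩
    rw [SimpleGraph.reachable_iff_reflTransGen] at hB
    exact Relation.ReflTransGen.lift Subtype.val
      (fun a b hab => ⟨hab, s.trans' a.2 (s.symm' b.2)⟩) _ _ hB
  · rintro h B ⟨y, rfl⟩
    have : Nonempty {x | s x y} := ⟨⟨y, s.refl' y⟩⟩
    refine ⟨?_⟩
    rintro ⟨a, ha⟩ ⟨b, hb⟩
    have key : ∀ c, Relation.ReflTransGen (fun a b => G.Adj a b ∧ s a b) a c →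
        ∃ hc : s c y, (G.induce {x | s x y}).Reachable ⟨a, ha⟩ ⟨c, hc⟩ := by
      intro c hc
      induction hc with
      | refl => exact ⟨ha, .refl _⟩
      | @tail c d _ hcd ih =>
        obtain ⟨hc, ih⟩ := ih
        refine ⟨s.trans' (s.symm' hcd.2) hc, ih.trans (SimpleGraph.Adj.reachable ?_)⟩
        exact hcd.1
    exact (key b (h a b (s.trans' ha (s.symm' hb)))).2

namespace IsAcyclicOrientation

variable {G : SimpleGraph V} {s : Setoid V} {R : Finset V} {O : V → V → Prop}

lemma rel (h : IsAcyclicOrientation G s R O) {a b : V} (hab : O a b) : s a b :=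
  ((h.adj_iff a b).1 (Or.inl hab)).2

lemma rel_of_reach (h : IsAcyclicOrientation G s R O) {a b : V}
    (hab : Relation.ReflTransGen O a b) : s a b := by
  induction hab with
  | refl => exact s.refl' _
  | tail _ hbc ih => exact s.trans' ih (h.rel hbc)

lemma exists_source_reach (h : IsAcyclicOrientation G s R O) (x : V) :
    ∃ r ∈ R, Relation.ReflTransGen O r x := by
  have : IsStrictOrder V (Relation.TransGen O) :=
    { irrefl := h.acyclic, trans := fun _ _ _ => Relation.TransGen.trans }
  have wf : WellFounded (Relation.TransGen O) := Finite.wellFounded_of_trans_of_irrefl _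
  induction x using wf.induction with
  | _ x ih =>
    by_cases hx : x ∈ R
    · exact ⟨x, hx, .refl⟩
    · rw [h.mem_iff] at hx
      push Not at hx
      obtain ⟨y, hy⟩ := hx
      obtain ⟨r, hr, hry⟩ := ih y (.single hy)
      exact ⟨r, hr, hry.tail hy⟩

lemma conn (h : IsAcyclicOrientation G s R O) (hR : IsTransversal s R) :
    ∀ x y, s x y → Relation.ReflTransGen (fun a b => G.Adj a b ∧ s a b) x y := by
  intro x y hxy
  obtain ⟨r, hr, hrx⟩ := h.exists_source_reach x
  obtain ⟨r', hr', hry⟩ := h.exists_source_reach y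
  have : r = r' := hR.eq_of_rel r hr r' hr'
    (s.trans' (h.rel_of_reach hrx) (s.trans' hxy (s.symm' (h.rel_of_reach hry))))
  subst this
  have hle : ∀ a b, O a b → G.Adj a b ∧ s a b := fun a b hab => (h.adj_iff a b).1 (Or.inl hab)
  have hsymm : Std.Symm (fun a b => G.Adj a b ∧ s a b) :=
    ⟨fun a b hab => ⟨hab.1.symm, s.symm' hab.2⟩⟩
  exact (Relation.ReflTransGen.stdSymm.symm _ _ (Relation.ReflTransGen.mono hle _ _ hrx)).trans
    (Relation.ReflTransGen.mono hle _ _ hry)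

end IsAcyclicOrientation

lemma IsTransversal.insert_of_merge {s : Setoid V} {u v : V} {R : Finset V}
    (hR : IsTransversal (mergeSetoid s u v) R) (hu : u ∈ R) (huv : ¬ s u v) :
    IsTransversal s (insert v R) := by
  have hs := fun x y => @Setoid.symm' _ s x y
  have ht := fun x y z => @Setoid.trans' _ s x y z
  have hr := fun x => @Setoid.refl' _ s x
  obtain ⟨h1, h2⟩ := hR
  simp only [mergeSetoid_apply] at h1 h2
  refine ⟨fun x => ?_, ?_⟩
  · obtain ⟨r, hr, h⟩ := h1 x
    grind
  · grind

lemma isAcyclicOrientation_restrict {G : SimpleGraph V} {s : Setoid V} {R : Finset V}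
    {O : V → V → Prop} {v : V} (h : IsAcyclicOrientation G s R O) :
    IsAcyclicOrientation G (splitSetoid s O v) (insert v R)
      (fun a b => O a b ∧ splitSetoid s O v a b) := by
  refine ⟨fun a b => ?_, fun a ha => ?_, fun x => ?_⟩
  · have := h.adj_iff a b
    have hs := @Setoid.symm' _ (splitSetoid s O v)
    have : splitSetoid s O v a b → s a b := fun h => (splitSetoid_apply.1 h).1
    constructor
    · rintro (h | h) <;> grind
    · grind
  · exact h.acyclic a (Relation.TransGen.mono (fun _ _ h => h.1) _ _ ha)
  · rw [Finset.mem_insert]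
    constructor
    · rintro (rfl | hx) y ⟨hy, hyx⟩
      · have := (splitSetoid_apply.1 hyx).2.2 .refl
        exact h.acyclic x (Relation.TransGen.tail' this hy)
      · exact (h.mem_iff x).1 hx y hy
    · intro hx
      by_contra! hcon
      obtain ⟨hxv, hxR⟩ := hcon
      rw [h.mem_iff] at hxR
      push Not at hxR
      obtain ⟨y, hy⟩ := hxR
      have key : ∀ z, O z x →
          (Relation.ReflTransGen O v x → Relation.ReflTransGen O v z) → False :=
        fun z hz hxz => hx z ⟨hz, splitSetoid_apply.2 ⟨h.rel hz, fun hv => hv.tail hz, hxz⟩⟩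
      by_cases hvx : Relation.ReflTransGen O v x
      · rcases Relation.ReflTransGen.cases_tail hvx with h0 | ⟨z, hz, hzx⟩
        · exact hxv h0
        · exact key z hzx fun _ => hz
      · exact key y hy fun h => absurd h hvx

section Glue

variable {G : SimpleGraph V} {s : Setoid V} {R : Finset V} {O : V → V → Prop} {u v : V}

/-- Adjoin to `O` all edges of `G` from the block of `u` to the block of `v`. -/
def glue (G : SimpleGraph V) (s : Setoid V) (u v : V) (O : V → V → Prop) (a b : V) : Prop :=
  O a b ∨ G.Adj a b ∧ s a u ∧ s b v

lemma isAcyclicOrientation_glue (hadj : G.Adj u v) (huv : ¬ s u v) (hu : u ∈ R)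
    (hR : IsTransversal (mergeSetoid s u v) R)
    (h : IsAcyclicOrientation G s (insert v R) O) :
    IsAcyclicOrientation G (mergeSetoid s u v) R (glue G s u v O) := by
  have hs := fun x y => @Setoid.symm' _ s x y
  have ht := fun x y z => @Setoid.trans' _ s x y z
  have hr := fun x => @Setoid.refl' _ s x
  refine ⟨fun a b => ?_, fun a ha => ?_, fun x => ?_⟩
  · have := h.adj_iff a b
    have hsy := G.adj_comm a b
    rw [mergeSetoid_apply]
    unfold glue
    grind
  · have key : ∀ y, Relation.TransGen (glue G s u v O) a y →
        Relation.TransGen O a y ∨ (s a u ∧ s y v) := by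
      intro y hy
      induction hy with
      | single hab =>
        rcases hab with hab | hab
        · exact Or.inl (.single hab)
        · exact Or.inr hab.2
      | @tail b c _ hbc ih =>
        rcases ih with ih | ih
        · rcases hbc with hbc | hbc
          · exact Or.inl (ih.tail hbc)
          · exact Or.inr ⟨ht _ _ _ (h.rel_of_reach ih.to_reflTransGen) hbc.2.1, hbc.2.2⟩
        · rcases hbc with hbc | hbc
          · exact Or.inr ⟨ih.1, ht _ _ _ (hs _ _ (h.rel hbc)) ih.2⟩
          · exact Or.inr ⟨ih.1, hbc.2.2⟩
    rcases key a ha with h1 | h1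
    · exact h.acyclic a h1
    · exact huv (ht _ _ _ (hs _ _ h1.1) h1.2)
  · have hm := h.mem_iff x
    rw [Finset.mem_insert] at hm
    constructor
    · rintro hx y (hy | ⟨-, -, hxv⟩)
      · exact hm.1 (Or.inr hx) y hy
      · have := hR.eq_of_rel x hx u hu (mergeSetoid_apply.2 (Or.inr (Or.inr ⟨hxv, hr _⟩)))
        exact huv (this ▸ hxv)
    · intro hx
      rcases hm.2 fun y hy => hx y (Or.inl hy) with rfl | hx'
      · exact absurd (Or.inr ⟨hadj, hr _, hr _⟩) (hx u)
      · exact hx'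

lemma splitSetoid_glue (huv : ¬ s u v) (hu : u ∈ R)
    (hR : IsTransversal (mergeSetoid s u v) R)
    (h : IsAcyclicOrientation G s (insert v R) O) :
    splitSetoid (mergeSetoid s u v) (glue G s u v O) v = s := by
  have hs := fun x y => @Setoid.symm' _ s x y
  have ht := fun x y z => @Setoid.trans' _ s x y z
  have hr := fun x => @Setoid.refl' _ s x
  have key : ∀ x, Relation.ReflTransGen (glue G s u v O) v x ↔ s x v := by
    intro x
    constructor
    · intro hx
      induction hx with
      | refl => exact hr _
      | @tail b c _ hbc ih =>
        rcases hbc with hbc | hbc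
        · exact ht _ _ _ (hs _ _ (h.rel hbc)) ih
        · exact hbc.2.2
    · intro hx
      obtain ⟨r, hr, hrx⟩ := h.exists_source_reach x
      have : r = v := (hR.insert_of_merge hu huv).eq_of_rel r hr v (Finset.mem_insert_self _ _)
        (ht _ _ _ (h.rel_of_reach hrx) hx)
      subst this
      exact Relation.ReflTransGen.mono (fun _ _ h => Or.inl h) _ _ hrx
  ext x y
  rw [splitSetoid_apply, key, key, mergeSetoid_apply]
  grind

lemma reach_source (h : IsAcyclicOrientation G s R O) (hu : u ∈ R) (hne : u ≠ v) :
    ¬ Relation.ReflTransGen O v u := by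
  intro hvu
  rcases Relation.ReflTransGen.cases_tail hvu with h0 | ⟨z, -, hz⟩
  · exact hne h0
  · exact (h.mem_iff u).1 hu z hz

lemma not_splitSetoid (h : IsAcyclicOrientation G s R O) (hu : u ∈ R) (hne : u ≠ v) :
    ¬ splitSetoid s O v u v := by
  rw [splitSetoid_apply]
  exact fun hh => reach_source h hu hne (hh.2.2 .refl)

lemma mergeSetoid_splitSetoid (h : IsAcyclicOrientation G s R O) (hu : u ∈ R) (hne : u ≠ v)
    (huv : s u v) : mergeSetoid (splitSetoid s O v) u v = s := by
  have hs := fun x y => @Setoid.symm' _ s x y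
  have ht := fun x y z => @Setoid.trans' _ s x y z
  have hn := reach_source h hu hne
  have hv : Relation.ReflTransGen O v v := .refl
  have hre := fun x => @h.rel_of_reach _ _ _ _ _ _ v x
  ext x y
  simp only [mergeSetoid_apply, splitSetoid_apply]
  grind

lemma glue_restrict (h : IsAcyclicOrientation G s R O) (hu : u ∈ R) (hne : u ≠ v)
    (huv : s u v) :
    glue G (splitSetoid s O v) u v (fun a b => O a b ∧ splitSetoid s O v a b) = O := by
  have hs := fun x y => @Setoid.symm' _ s x y
  have ht := fun x y z => @Setoid.trans' _ s x y z
  have hn := reach_source h hu hne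
  have hv : Relation.ReflTransGen O v v := .refl
  have hre := fun x => @h.rel_of_reach _ _ _ _ _ _ v x
  ext a b
  have h1 := h.adj_iff a b
  have h2 : O a b → Relation.ReflTransGen O v a → Relation.ReflTransGen O v b :=
    fun h hv => hv.tail h
  have h3 : O b a → Relation.ReflTransGen O v b → Relation.ReflTransGen O v a :=
    fun h hv => hv.tail h
  simp only [glue, splitSetoid_apply]
  grind

lemma restrict_glue (huv : ¬ s u v) (h : IsAcyclicOrientation G s (insert v R) O) :
    (fun a b => glue G s u v O a b ∧ s a b) = O := by
  have hs := fun x y => @Setoid.symm' _ s x y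
  have ht := fun x y z => @Setoid.trans' _ s x y z
  ext a b
  have h1 := @h.rel _ _ _ _ _ _ a b
  simp only [glue]
  grind

end Glue

lemma card_acyclicOrientations_eq_sum {G : SimpleGraph V} {s : Setoid V} {R : Finset V} {u v : V}
    (hadj : G.Adj u v) (huv : s u v) (hR : IsTransversal s R) (hu : u ∈ R) :
    #(acyclicOrientations G s R) =
      ∑ t with ¬ t u v ∧ mergeSetoid t u v = s, #(acyclicOrientations G t (insert v R)) := by
  rw [Finset.card_eq_sum_card_fiberwise (f := fun O => splitSetoid s O v)
    (t := univ.filter fun t => ¬ t u v ∧ mergeSetoid t u v = s)]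
  · refine Finset.sum_congr rfl fun t ht => ?_
    obtain ⟨hn, rfl⟩ := (Finset.mem_filter.1 ht).2
    refine Finset.card_bij' (fun O _ a b => O a b ∧ t a b) (fun O _ => glue G t u v O)
      ?_ ?_ ?_ ?_
    · intro O hO
      simp only [acyclicOrientations, Finset.mem_filter, Finset.mem_univ, true_and] at hO ⊢
      have := isAcyclicOrientation_restrict (v := v) hO.1
      rwa [hO.2] at this
    · intro O hO
      simp only [acyclicOrientations, Finset.mem_filter, Finset.mem_univ, true_and] at hO ⊢
      exact ⟨isAcyclicOrientation_glue hadj hn hu hR hO, splitSetoid_glue hn hu hR hO⟩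
    · intro O hO
      simp only [acyclicOrientations, Finset.mem_filter, Finset.mem_univ, true_and] at hO
      have := glue_restrict hO.1 hu hadj.ne huv
      rwa [hO.2] at this
    · intro O hO
      simp only [acyclicOrientations, Finset.mem_filter, Finset.mem_univ, true_and] at hO
      exact restrict_glue hn hO
  · intro O hO
    simp only [acyclicOrientations, Finset.coe_filter, Finset.mem_univ, true_and,
      Set.mem_ofPred_eq] at hO ⊢
    exact ⟨not_splitSetoid hO hu hadj.ne, mergeSetoid_splitSetoid hO hu hadj.ne huv⟩

lemma conn_mergeSetoid {G : SimpleGraph V} {s : Setoid V} {u v : V} (hadj : G.Adj u v)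
    (h : ∀ x y, s x y → Relation.ReflTransGen (fun a b => G.Adj a b ∧ s a b) x y) :
    ∀ x y, mergeSetoid s u v x y →
      Relation.ReflTransGen (fun a b => G.Adj a b ∧ mergeSetoid s u v a b) x y := by
  have h' : ∀ x y, s x y →
      Relation.ReflTransGen (fun a b => G.Adj a b ∧ mergeSetoid s u v a b) x y := fun x y hxy =>
    Relation.ReflTransGen.mono (fun a b hab => ⟨hab.1, Or.inl hab.2⟩) _ _ (h x y hxy)
  have huv : mergeSetoid s u v u v := Or.inr (Or.inl ⟨s.refl' u, s.refl' v⟩)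
  rintro x y (hxy | ⟨hx, hy⟩ | ⟨hx, hy⟩)
  · exact h' x y hxy
  · exact ((h' x u hx).tail ⟨hadj, huv⟩).trans (h' v y (s.symm' hy))
  · exact ((h' x v hx).tail ⟨hadj.symm, Setoid.symm' _ huv⟩).trans (h' u y (s.symm' hy))

lemma mergeSetoid_le {s t : Setoid V} {u v : V} (h : s ≤ t) (huv : t u v) :
    mergeSetoid s u v ≤ t := by
  rintro x y (hxy | ⟨hx, hy⟩ | ⟨hx, hy⟩)
  · exact h hxy
  · exact t.trans' (h hx) (t.trans' huv (t.symm' (h hy)))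
  · exact t.trans' (h hx) (t.trans' (t.symm' huv) (t.symm' (h hy)))

lemma exists_isTransversal (s : Setoid V) (u : V) : ∃ R : Finset V, u ∈ R ∧ IsTransversal s R := by
  have hs := fun x y => @Setoid.symm' _ s x y
  have ht := fun x y z => @Setoid.trans' _ s x y z
  let f : V → V := fun x => if s x u then u else (Quotient.mk s x).out
  have hf : ∀ x, s (f x) x := by
    intro x
    by_cases h : s x u
    · simp only [f, h, if_true]; exact hs _ _ h
    · simp only [f, h, if_false]; exact Quotient.mk_out (s := s) x
  have hf' : ∀ x y, s x y → f x = f y := by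
    intro x y h
    have hxy : s x u ↔ s y u := ⟨fun hx => ht _ _ _ (hs _ _ h) hx, fun hy => ht _ _ _ h hy⟩
    have hq : Quotient.mk s x = Quotient.mk s y := Quotient.sound h
    simp only [f, hxy, hq]
  refine ⟨univ.image f, ?_, ?_, ?_⟩
  · exact Finset.mem_image.2 ⟨u, Finset.mem_univ _, by simp [f]⟩
  · exact fun x => ⟨f x, Finset.mem_image_of_mem f (Finset.mem_univ x), hf x⟩
  · intro r hr r' hr' h
    obtain ⟨x, -, rfl⟩ := Finset.mem_image.1 hr
    obtain ⟨y, -, rfl⟩ := Finset.mem_image.1 hr'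
    exact hf' x y (ht _ _ _ (hs _ _ (hf x)) (ht _ _ _ h (hf y)))

lemma card_acyclicOrientations_bot {G : SimpleGraph V} {R : Finset V}
    (hR : IsTransversal (⊥ : Setoid V) R) :
    R = univ ∧ #(acyclicOrientations G ⊥ R) = 1 := by
  have hbot : ∀ x y, (⊥ : Setoid V) x y ↔ x = y := fun x y => Iff.rfl
  have hU : R = univ := by
    ext x
    obtain ⟨r, hr, h⟩ := hR.exists_mem x
    rw [hbot] at h
    subst h
    simp [hr]
  refine ⟨hU, Finset.card_eq_one.2 ⟨fun _ _ => False, ?_⟩⟩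
  ext O
  simp only [acyclicOrientations, Finset.mem_filter, Finset.mem_univ, true_and,
    Finset.mem_singleton]
  constructor
  · intro h
    ext a b
    have := h.rel (a := a) (b := b)
    rw [hbot] at this
    refine ⟨fun hab => ?_, False.elim⟩
    have hab' := this hab
    subst hab'
    exact h.acyclic _ (.single hab)
  · rintro rfl
    refine ⟨fun a b => ?_, fun a ha => ?_, fun x => by simp [hU]⟩
    · rw [hbot]
      refine ⟨fun h => by tauto, ?_⟩
      rintro ⟨h, rfl⟩
      exact absurd h (G.loopless.irrefl _)
    · rcases Relation.TransGen.head'_iff.1 ha with ⟨_, h, -⟩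
      exact h

lemma card_acyclicOrientations_eq_sum_connPartition {G : SimpleGraph V} {s : Setoid V}
    {R : Finset V} {u v : V} (hadj : G.Adj u v) (huv : s u v) (hR : IsTransversal s R)
    (hu : u ∈ R) :
    #(acyclicOrientations G s R) =
      ∑ t : ConnPartition G with ¬ t.1 u v ∧ mergeSetoid t.1 u v = s,
        #(acyclicOrientations G t.1 (insert v R)) := by
  rw [card_acyclicOrientations_eq_sum hadj huv hR hu]
  symm
  refine Finset.sum_bij_ne_zero (fun t _ _ => t.1) ?_ ?_ ?_ ?_
  · intro t ht _
    simpa using ht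
  · intro a _ _ b _ _ hab
    exact Subtype.ext hab
  · intro t ht hne
    obtain ⟨hn, rfl⟩ := (Finset.mem_filter.1 ht).2
    obtain ⟨O, hO⟩ := Finset.card_ne_zero.1 hne
    have hO' : IsAcyclicOrientation G t (insert v R) O := (Finset.mem_filter.1 hO).2
    refine ⟨⟨t, conn_iff.2 (hO'.conn (hR.insert_of_merge hu hn))⟩, ?_, hne, rfl⟩
    exact Finset.mem_filter.2 ⟨Finset.mem_univ _, hn, rfl⟩
  · intros
    rfl

theorem mu_eq_card_acyclicOrientations {G : SimpleGraph V} (b : ConnPartition G) (hb : b.1 = ⊥)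
    (π : ConnPartition G) (R : Finset V) (hR : IsTransversal π.1 R) :
    IncidenceAlgebra.mu ℤ b π =
      (-1) ^ (Fintype.card V + #R) * (#(acyclicOrientations G π.1 R) : ℤ) := by
  have hle : ∀ σ : ConnPartition G, b ≤ σ := fun σ => by
    change b.1 ≤ σ.1
    rw [hb]; exact bot_le
  induction π using (wellFounded_lt (α := ConnPartition G)).induction generalizing R with
  | _ π ih =>
  by_cases hπ : b = π
  · subst hπ
    rw [hb] at hR ⊢
    obtain ⟨rfl, hc⟩ := card_acyclicOrientations_bot (G := G) hR
    rw [hc, Finset.card_univ, IncidenceAlgebra.mu_self, ← two_mul, pow_mul]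
    simp
  · obtain ⟨u, v, hu, hadj, huv⟩ : ∃ u v, u ∈ R ∧ G.Adj u v ∧ π.1 u v := by
      have : ∃ x y, π.1 x y ∧ x ≠ y := by
        by_contra! hcon
        refine hπ (Subtype.ext ?_)
        rw [hb]
        refine le_antisymm bot_le fun x y h => ?_
        exact hcon x y h
      obtain ⟨x, y, hxy, hne⟩ := this
      obtain ⟨r, hr, hrx⟩ := hR.exists_mem x
      have : ∃ z, π.1 r z ∧ r ≠ z := by
        by_cases hrx' : r = x
        · exact ⟨y, hrx' ▸ hxy, hrx' ▸ hne⟩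
        · exact ⟨x, hrx, hrx'⟩
      obtain ⟨z, hz, hrz⟩ := this
      rcases Relation.ReflTransGen.cases_head (conn_iff.1 π.2 r z hz) with h | ⟨w, hw, -⟩
      · exact absurd h hrz
      · exact ⟨r, w, hr, hw.1, hw.2⟩
    have hsum := IncidenceAlgebra.sum_Icc_mu_right (𝕜 := ℤ) b π
    rw [if_neg hπ, ← Finset.sum_filter_add_sum_filter_not _ (fun σ => σ.1 u v)] at hsum
    let m : ConnPartition G → ConnPartition G := fun σ =>
      ⟨mergeSetoid σ.1 u v, conn_iff.2 (conn_mergeSetoid hadj (conn_iff.1 σ.2))⟩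
    have hmaps : ∀ σ ∈ (Icc b π).filter (fun σ => ¬ σ.1 u v),
        m σ ∈ (Icc b π).filter (fun σ => σ.1 u v) := by
      intro σ hσ
      simp only [Finset.mem_filter, Finset.mem_Icc] at hσ ⊢
      exact ⟨⟨hle _, mergeSetoid_le hσ.1.2 huv⟩, Or.inr (Or.inl ⟨σ.1.refl' u, σ.1.refl' v⟩)⟩
    rw [← Finset.sum_fiberwise_of_maps_to hmaps, ← Finset.sum_add_distrib] at hsum
    have hfib : ∀ σ ∈ (Icc b π).filter (fun σ => σ.1 u v), ∀ R' : Finset V, u ∈ R' →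
        IsTransversal σ.1 R' →
        ∑ τ ∈ (Icc b π).filter (fun σ => ¬ σ.1 u v) with m τ = σ, IncidenceAlgebra.mu ℤ b τ =
          -((-1) ^ (Fintype.card V + #R') * (#(acyclicOrientations G σ.1 R') : ℤ)) := by
      intro σ hσ R' hu' hR'
      simp only [Finset.mem_filter, Finset.mem_Icc] at hσ
      have hset : ((Icc b π).filter (fun σ => ¬ σ.1 u v)).filter (fun τ => m τ = σ) =
          univ.filter fun t : ConnPartition G => ¬ t.1 u v ∧ mergeSetoid t.1 u v = σ.1 := by
        ext τ
        simp only [Finset.mem_filter, Finset.mem_Icc, Finset.mem_univ, true_and]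
        constructor
        · rintro ⟨⟨-, h1⟩, h2⟩
          exact ⟨h1, congrArg Subtype.val h2⟩
        · rintro ⟨h1, h2⟩
          refine ⟨⟨⟨hle _, le_trans ?_ hσ.1.2⟩, h1⟩, Subtype.ext h2⟩
          change τ.1 ≤ σ.1
          rw [← h2]
          exact fun x y h => Or.inl h
      have hv : v ∉ R' := fun hv => hadj.ne (hR'.eq_of_rel u hu' v hv hσ.2)
      rw [hset, card_acyclicOrientations_eq_sum_connPartition hadj hσ.2 hR' hu', Nat.cast_sum,
        Finset.mul_sum, ← Finset.sum_neg_distrib]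
      refine Finset.sum_congr rfl fun τ hτ => ?_
      simp only [Finset.mem_filter, Finset.mem_univ, true_and] at hτ
      have hlt : τ < π := by
        refine lt_of_le_of_ne (le_trans ?_ hσ.1.2) ?_
        · change τ.1 ≤ σ.1
          rw [← hτ.2]
          exact fun x y h => Or.inl h
        · rintro rfl
          exact hτ.1 huv
      rw [ih τ hlt (insert v R') (IsTransversal.insert_of_merge (hτ.2 ▸ hR') hu' hτ.1),
        Finset.card_insert_of_notMem hv, ← add_assoc, pow_succ]
      ring
    rw [Finset.sum_eq_single π] at hsum
    · rw [hfib π _ R hu hR] at hsum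
      · linarith
      · simp [hle, huv]
    · intro σ hσ hne
      obtain ⟨R', hu', hR'⟩ := exists_isTransversal σ.1 u
      rw [hfib σ hσ R' hu' hR', ih σ _ R' hR']
      · ring
      · simp only [Finset.mem_filter, Finset.mem_Icc] at hσ
        exact lt_of_le_of_ne hσ.1.2 hne
    · intro h
      simp [hle, huv] at h

/-- The indicator of `a` preceding `b` in the ordering `σ`. -/
noncomputable def precedes (σ : Fin (Fintype.card V) ≃ V) (a b : V) : ℤ :=
  if σ.symm a < σ.symm b then 1 else 0

/-- The orientation of `G` induced by the ordering `σ`: every edge points to its later end. -/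
def inducedOrientation (G : SimpleGraph V) (σ : Fin (Fintype.card V) ≃ V) (a b : V) : Prop :=
  G.Adj a b ∧ σ.symm a < σ.symm b

/-- `τ` is obtained from `σ` when each vertex `v` crosses from the beginning to the end of the
ordering `k v` times, as far as the order of the ends of each edge of `G` is concerned. -/
def FlipsTo (G : SimpleGraph V) (k : V → ℤ) (σ τ : Fin (Fintype.card V) ≃ V) : Prop :=
  ∀ a b, G.Adj a b → precedes τ a b = precedes σ a b - k a + k b

lemma FlipsTo.refl {G : SimpleGraph V} (σ : Fin (Fintype.card V) ≃ V) : FlipsTo G 0 σ σ := by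
  intro a b _
  simp

lemma FlipsTo.symm {G : SimpleGraph V} {k : V → ℤ} {σ τ : Fin (Fintype.card V) ≃ V}
    (h : FlipsTo G k σ τ) : FlipsTo G (-k) τ σ := by
  intro a b hab
  rw [h a b hab]
  simp only [Pi.neg_apply]
  ring

lemma FlipsTo.trans {G : SimpleGraph V} {k l : V → ℤ} {σ τ ρ : Fin (Fintype.card V) ≃ V}
    (h : FlipsTo G k σ τ) (h' : FlipsTo G l τ ρ) : FlipsTo G (k + l) σ ρ := by
  intro a b hab
  rw [h' a b hab, h a b hab]
  simp only [Pi.add_apply]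
  ring

lemma finRotate_symm_val {n : ℕ} (i : Fin n) :
    (((finRotate n).symm i : Fin n) : ℕ) = if (i : ℕ) = 0 then n - 1 else i - 1 := by
  obtain ⟨j, rfl⟩ := (finRotate n).surjective i
  rw [Equiv.symm_apply_apply]
  cases n with
  | zero => exact j.elim0
  | succ n =>
    rw [coe_finRotate]
    split_ifs with h <;> simp_all

lemma flipsTo_swap {G : SimpleGraph V} {σ : Fin (Fintype.card V) ≃ V} {i j : Fin (Fintype.card V)}
    (hij : (i : ℕ) + 1 = j) (hadj : ¬ G.Adj (σ i) (σ j)) :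
    FlipsTo G 0 σ ((Equiv.swap i j).trans σ) := by
  intro a b hab
  have h1 : ¬ (σ.symm a = i ∧ σ.symm b = j) := by
    rintro ⟨rfl, rfl⟩
    simp [hab] at hadj
  have h2 : ¬ (σ.symm a = j ∧ σ.symm b = i) := by
    rintro ⟨rfl, rfl⟩
    simp [hab.symm] at hadj
  have h3 : σ.symm a ≠ σ.symm b := fun h => hab.ne (σ.symm.injective h)
  have : Equiv.swap i j (σ.symm a) < Equiv.swap i j (σ.symm b) ↔ σ.symm a < σ.symm b := by
    simp only [Equiv.swap_apply_def, Fin.lt_def]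
    simp only [Fin.ext_iff] at h1 h2 h3 ⊢
    split_ifs <;> omega
  simp [precedes, this]

lemma flipsTo_rotate {G : SimpleGraph V} (σ : Fin (Fintype.card V) ≃ V)
    (z : Fin (Fintype.card V)) (hz : (z : ℕ) = 0) :
    FlipsTo G (Pi.single (σ z) 1) σ ((finRotate (Fintype.card V)).trans σ) := by
  intro a b hab
  have key : ∀ x, (Pi.single (σ z) 1 : V → ℤ) x =
      if ((σ.symm x : Fin _) : ℕ) = 0 then 1 else 0 := by
    intro x
    rw [Pi.single_apply]
    refine if_congr ?_ rfl rfl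
    rw [← hz, ← Fin.ext_iff, Equiv.symm_apply_eq]
  have h3 : ((σ.symm a : Fin _) : ℕ) ≠ σ.symm b :=
    fun h => hab.ne (σ.symm.injective (Fin.ext h))
  have ha := (σ.symm a).isLt
  have hb := (σ.symm b).isLt
  simp only [precedes, key, Equiv.symm_trans_apply, Fin.lt_def, finRotate_symm_val]
  split_ifs <;> omega

lemma eqvGen_exists_flipsTo {G : SimpleGraph V} {σ τ : Fin (Fintype.card V) ≃ V}
    (h : Relation.EqvGen (orderingStep G) σ τ) : ∃ k, FlipsTo G k σ τ := by
  induction h with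
  | rel σ τ h =>
    rcases h with ⟨j, hj, hadj, rfl⟩ | rfl
    · exact ⟨0, flipsTo_swap rfl hadj⟩
    · by_cases hc : 0 < Fintype.card V
      · exact ⟨_, flipsTo_rotate σ ⟨0, hc⟩ rfl⟩
      · refine ⟨0, fun a => absurd (Fintype.card_pos_iff.2 ⟨a⟩) hc⟩
  | refl σ => exact ⟨0, .refl σ⟩
  | symm σ τ _ ih =>
    obtain ⟨k, hk⟩ := ih
    exact ⟨-k, hk.symm⟩
  | trans σ τ ρ _ _ ih1 ih2 =>
    obtain ⟨k, hk⟩ := ih1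
    obtain ⟨l, hl⟩ := ih2
    exact ⟨k + l, hk.trans hl⟩

lemma isAcyclicOrientation_inducedOrientation (G : SimpleGraph V)
    (σ : Fin (Fintype.card V) ≃ V) (R : Finset V)
    (hR : ∀ x, x ∈ R ↔ ∀ y, ¬ inducedOrientation G σ y x) :
    IsAcyclicOrientation G ⊤ R (inducedOrientation G σ) := by
  refine ⟨fun a b => ?_, fun a ha => ?_, hR⟩
  · have htop : (⊤ : Setoid V) a b := trivial
    simp only [inducedOrientation, htop, and_true, G.adj_comm b a, ← and_or_left,
      and_iff_left_iff_imp]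
    exact fun h => lt_or_gt_of_ne fun hh => h.ne (σ.symm.injective hh)
  · have key : ∀ b, Relation.TransGen (inducedOrientation G σ) a b → σ.symm a < σ.symm b := by
      intro b hb
      induction hb with
      | single h => exact h.2
      | tail _ h ih => exact ih.trans h.2
    exact lt_irrefl _ (key a ha)

lemma exists_inducedOrientation_eq {G : SimpleGraph V} {R : Finset V} {O : V → V → Prop}
    (h : IsAcyclicOrientation G ⊤ R O) :
    ∃ σ : Fin (Fintype.card V) ≃ V, inducedOrientation G σ = O := by
  have : IsPartialOrder V (Relation.ReflTransGen O) :=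
    { refl := fun _ => .refl
      trans := fun _ _ _ => Relation.ReflTransGen.trans
      antisymm := fun a b hab hba => by
        rcases Relation.ReflTransGen.cases_head hab with h0 | ⟨c, hac, hcb⟩
        · exact h0
        · exact absurd (Relation.TransGen.head' hac (hcb.trans hba)) (h.acyclic a) }
  obtain ⟨s, hs, hle⟩ := extend_partialOrder (Relation.ReflTransGen O)
  let L : LinearOrder V :=
    { le := s
      le_refl := hs.refl
      le_trans := hs.trans
      le_antisymm := hs.antisymm
      le_total := hs.total
      toDecidableLE := Classical.decRel _ }
  let e := @monoEquivOfFin V _ L _ rfl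
  refine ⟨e.toEquiv, ?_⟩
  have hlt : ∀ a b, O a b → e.symm a < e.symm b := by
    intro a b hab
    refine lt_of_le_of_ne (e.symm.monotone (hle a b (.single hab))) fun hh => ?_
    have := e.symm.injective hh
    subst this
    exact h.acyclic a (.single hab)
  ext a b
  constructor
  · rintro ⟨hadj, hab⟩
    rcases (h.adj_iff a b).2 ⟨hadj, trivial⟩ with h1 | h1
    · exact h1
    · exact absurd (hlt _ _ h1) (lt_asymm hab)
  · intro hab
    exact ⟨((h.adj_iff a b).1 (Or.inl hab)).1, hlt a b hab⟩

lemma inducedOrientation_eq_of_flipsTo {G : SimpleGraph V} {k : V → ℤ}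
    {σ τ : Fin (Fintype.card V) ≃ V} (h : FlipsTo G k σ τ) (hk : ∀ a b, k a = k b) :
    inducedOrientation G σ = inducedOrientation G τ := by
  ext a b
  refine and_congr_right fun hab => ?_
  have := h a b hab
  rw [hk a b] at this
  simp only [precedes] at this
  split_ifs at this <;> first | tauto | omega

/-- If `S` is nonempty and no edge enters it, then it contains a source. -/
lemma exists_source_mem {G : SimpleGraph V} (σ : Fin (Fintype.card V) ≃ V) (S : Finset V)
    (hS : S.Nonempty) (h : ∀ a ∈ S, ∀ b ∉ S, ¬ inducedOrientation G σ b a) :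
    ∃ x ∈ S, ∀ y, ¬ inducedOrientation G σ y x := by
  obtain ⟨x, hx, hmin⟩ := Finset.exists_min_image S σ.symm hS
  refine ⟨x, hx, fun y hy => ?_⟩
  by_cases hyS : y ∈ S
  · exact absurd hy.2 (not_lt.2 (hmin y hyS))
  · exact h x hx y hyS hy

lemma FlipsTo.le_of_unique_source {G : SimpleGraph V} {k : V → ℤ}
    {σ τ : Fin (Fintype.card V) ≃ V} (h : FlipsTo G k σ τ) {q : V}
    (hq : ∀ x, (∀ y, ¬ inducedOrientation G σ y x) → x = q) (a : V) : k a ≤ k q := by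
  obtain ⟨m, -, hm⟩ := Finset.exists_max_image univ k ⟨a, Finset.mem_univ a⟩
  obtain ⟨x, hx, hsrc⟩ := exists_source_mem (G := G) σ (univ.filter fun x => k x = k m)
    ⟨m, by simp⟩ (by
      intro a ha b hb hba
      simp only [Finset.mem_filter, Finset.mem_univ, true_and] at ha hb
      have h1 := hm b (Finset.mem_univ b)
      have h2 := h b a hba.1
      have h3 := hba.2
      simp only [precedes, h3, if_true] at h2
      split_ifs at h2 <;> omega)
  rw [← hq x hsrc, (Finset.mem_filter.1 hx).2]
  exact hm a (Finset.mem_univ a)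

lemma inducedOrientation_eq_of_eqvGen {G : SimpleGraph V} {σ τ : Fin (Fintype.card V) ≃ V}
    (h : Relation.EqvGen (orderingStep G) σ τ) {q : V}
    (hσ : ∀ x, (∀ y, ¬ inducedOrientation G σ y x) → x = q)
    (hτ : ∀ x, (∀ y, ¬ inducedOrientation G τ y x) → x = q) :
    inducedOrientation G σ = inducedOrientation G τ := by
  obtain ⟨k, hk⟩ := eqvGen_exists_flipsTo h
  have key : ∀ a, k a = k q := fun a => by
    have h1 := hk.le_of_unique_source hσ a
    have h2 := hk.symm.le_of_unique_source hτ a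
    simp only [Pi.neg_apply] at h2
    omega
  exact inducedOrientation_eq_of_flipsTo hk fun a b => (key a).trans (key b).symm

lemma exists_descent {n : ℕ} (g : Equiv.Perm (Fin n)) (hg : g ≠ 1) :
    ∃ i j : Fin n, (i : ℕ) + 1 = j ∧ g j < g i := by
  by_contra! hcon
  cases n with
  | zero => exact hg (Subsingleton.elim _ _)
  | succ n =>
    have hmono : StrictMono g := Fin.strictMono_iff_lt_succ.2 fun i =>
      lt_of_le_of_ne (hcon i.castSucc i.succ (by simp)) fun h =>
        (Fin.castSucc_lt_succ (i := i)).ne (g.injective h)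
    refine hg (Equiv.ext fun i => ?_)
    have : (hmono.orderIsoOfSurjective g g.surjective) = OrderIso.refl _ := Subsingleton.elim _ _
    exact congrArg (fun f : Fin (n + 1) ≃o Fin (n + 1) => f i) this

lemma eqvGen_of_inducedOrientation_eq {G : SimpleGraph V} (σ τ : Fin (Fintype.card V) ≃ V)
    (h : inducedOrientation G σ = inducedOrientation G τ) :
    Relation.EqvGen (orderingStep G) σ τ := by
  let inv : (Fin (Fintype.card V) ≃ V) → Finset (V × V) := fun σ =>
    univ.filter fun p => σ.symm p.1 < σ.symm p.2 ∧ τ.symm p.2 < τ.symm p.1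
  have hinv : ∀ σ a b, (a, b) ∈ inv σ ↔ σ.symm a < σ.symm b ∧ τ.symm b < τ.symm a := fun σ a b =>
    Finset.mem_filter_univ _
  induction hn : #(inv σ) using Nat.strong_induction_on generalizing σ with
  | _ n ih =>
  by_cases hστ : σ = τ
  · exact hστ ▸ .refl _
  obtain ⟨i, j, hij, hlt⟩ := exists_descent (σ.trans τ.symm) (by
    intro h1
    refine hστ (Equiv.ext fun i => ?_)
    have := Equiv.congr_fun h1 i
    simpa [Equiv.symm_apply_eq] using this)
  simp only [Equiv.trans_apply] at hlt
  have hadj : ¬ G.Adj (σ i) (σ j) := by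
    intro hadj
    have : inducedOrientation G σ (σ i) (σ j) := by
      refine ⟨hadj, ?_⟩
      simp only [Equiv.symm_apply_apply, Fin.lt_def]
      omega
    rw [h] at this
    exact lt_asymm hlt this.2
  have hj : (i : ℕ) + 1 < Fintype.card V := hij ▸ j.isLt
  obtain rfl : j = ⟨(i : ℕ) + 1, hj⟩ := Fin.ext hij.symm
  have hstep : orderingStep G σ ((Equiv.swap i ⟨(i : ℕ) + 1, hj⟩).trans σ) :=
    Or.inl ⟨i, hj, hadj, rfl⟩
  refine .trans _ _ _ (.rel _ _ hstep) (ih _ ?_ _ ?_ rfl)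
  · rw [← hn]
    refine Finset.card_lt_card (Finset.ssubset_iff_of_subset ?_ |>.2
      ⟨(σ i, σ ⟨(i : ℕ) + 1, hj⟩), ?_, ?_⟩)
    · intro p hab
      obtain ⟨a, b⟩ := p
      rw [hinv, Equiv.symm_trans_apply, Equiv.symm_trans_apply, Equiv.symm_swap] at hab
      rw [hinv]
      refine ⟨?_, hab.2⟩
      have hne : ¬ (σ.symm a = ⟨(i : ℕ) + 1, hj⟩ ∧ σ.symm b = i) := by
        rintro ⟨h1, h2⟩
        rw [Equiv.symm_apply_eq] at h1 h2
        rw [h1, h2] at hab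
        exact lt_asymm hlt hab.2
      have h1 := hab.1
      simp only [Equiv.swap_apply_def, Fin.lt_def] at h1 ⊢
      simp only [Fin.ext_iff] at h1 hne
      split_ifs at h1 <;> omega
    · rw [hinv, Equiv.symm_apply_apply, Equiv.symm_apply_apply, Fin.lt_def]
      exact ⟨Nat.lt_succ_self _, hlt⟩
    · rw [hinv, Equiv.symm_trans_apply, Equiv.symm_trans_apply, Equiv.symm_swap,
        Equiv.symm_apply_apply, Equiv.symm_apply_apply, Equiv.swap_apply_left,
        Equiv.swap_apply_right, Fin.lt_def]
      exact fun h => absurd h.1 (Nat.not_lt.2 (Nat.le_succ _))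
  · rw [← h]
    exact (inducedOrientation_eq_of_flipsTo (flipsTo_swap rfl hadj) fun _ _ => rfl).symm

/-- A source of an ordering may be moved to its end. -/
lemma exists_flip_source {G : SimpleGraph V} (v : V) (σ : Fin (Fintype.card V) ≃ V)
    (hv : ∀ y, ¬ inducedOrientation G σ y v) :
    ∃ τ, Relation.EqvGen (orderingStep G) σ τ ∧ FlipsTo G (Pi.single v 1) σ τ := by
  induction hp : ((σ.symm v : Fin _) : ℕ) generalizing σ with
  | zero =>
    refine ⟨_, .rel _ _ (Or.inr rfl), ?_⟩
    simpa using flipsTo_rotate (G := G) σ (σ.symm v) hp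
  | succ p ih =>
    have hlt : p + 1 < Fintype.card V := hp ▸ (σ.symm v).isLt
    let i : Fin (Fintype.card V) := ⟨p, by omega⟩
    have hj : σ.symm v = ⟨p + 1, hlt⟩ := Fin.ext hp
    have hv' : σ ⟨p + 1, hlt⟩ = v := by rw [← hj, Equiv.apply_symm_apply]
    have hadj : ¬ G.Adj (σ i) (σ ⟨p + 1, hlt⟩) := by
      intro hadj
      rw [hv'] at hadj
      refine hv (σ i) ⟨hadj, ?_⟩
      rw [Equiv.symm_apply_apply, hj]
      simp [i, Fin.lt_def]
    have hfl := flipsTo_swap (G := G) (σ := σ) (i := i) (j := ⟨p + 1, hlt⟩) rfl hadj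
    obtain ⟨τ, h1, h2⟩ := ih ((Equiv.swap i ⟨p + 1, hlt⟩).trans σ)
      (by rwa [← inducedOrientation_eq_of_flipsTo hfl fun _ _ => rfl])
      (by simp [hj, i])
    exact ⟨τ, .trans _ _ _ (.rel _ _ (Or.inl ⟨i, hlt, hadj, rfl⟩)) h1, by simpa using hfl.trans h2⟩

lemma FlipsTo.le_dist {G : SimpleGraph V} (hG : G.Connected) {k : V → ℤ}
    {σ τ : Fin (Fintype.card V) ≃ V} (h : FlipsTo G k σ τ) {q : V} (hq : k q = 0) (v : V) :
    k v ≤ G.dist v q := by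
  have key : ∀ {a b : V} (p : G.Walk a b), k a ≤ k b + p.length := by
    intro a b p
    induction p with
    | nil => simp
    | @cons a c b hac p ih =>
      have := h a c hac
      simp only [precedes] at this
      simp only [SimpleGraph.Walk.length_cons, Nat.cast_add, Nat.cast_one]
      split_ifs at this <;> omega
  obtain ⟨p, hp⟩ := (hG.preconnected v q).exists_walk_length_eq_dist
  have := key p
  rw [hp] at this
  omega

lemma exists_eqvGen_unique_source {G : SimpleGraph V} (hG : G.Connected) (q : V)
    (σ : Fin (Fintype.card V) ≃ V) :
    ∃ τ, Relation.EqvGen (orderingStep G) σ τ ∧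
      ∀ x, x = q ↔ ∀ y, ¬ inducedOrientation G τ y x := by
  obtain ⟨z, ⟨τ, k, hστ, hk, hq, rfl⟩, hmax⟩ := Int.exists_greatest_of_bdd
    (P := fun z => ∃ τ k, Relation.EqvGen (orderingStep G) σ τ ∧ FlipsTo G k σ τ ∧ k q = 0 ∧
      ∑ v, k v = z)
    ⟨∑ v, (G.dist v q : ℤ), by
      rintro _ ⟨τ, k, -, hk, hq, rfl⟩
      exact Finset.sum_le_sum fun v _ => hk.le_dist hG hq v⟩
    ⟨0, σ, 0, .refl _, .refl _, rfl, by simp⟩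
  have huniq : ∀ x, (∀ y, ¬ inducedOrientation G τ y x) → x = q := by
    intro x hx
    by_contra hxq
    obtain ⟨ρ, h1, h2⟩ := exists_flip_source x τ hx
    have := hmax (∑ v, (k + Pi.single x 1 : V → ℤ) v) ⟨ρ, k + Pi.single x 1, hστ.trans _ _ _ h1,
      hk.trans h2, by simp [hq, Ne.symm hxq], rfl⟩
    simp [Finset.sum_add_distrib] at this
  refine ⟨τ, hστ, fun x => ⟨?_, huniq x⟩⟩
  rintro rfl
  obtain ⟨y, -, hy⟩ := exists_source_mem (G := G) τ univ ⟨x, Finset.mem_univ x⟩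
    (fun _ _ b hb => absurd (Finset.mem_univ b) hb)
  exact huniq y hy ▸ hy

theorem card_quot_orderingStep {G : SimpleGraph V} (hG : G.Connected) (q : V) :
    Nat.card (Quot (orderingStep G)) = #(acyclicOrientations G ⊤ {q}) := by
  have hmem : ∀ O, O ∈ acyclicOrientations G ⊤ {q} ↔ IsAcyclicOrientation G ⊤ {q} O := fun O => by
    simp [acyclicOrientations]
  choose f hf using fun O : acyclicOrientations G ⊤ {q} =>
    exists_inducedOrientation_eq ((hmem O).1 O.2)
  rw [← Nat.card_eq_finsetCard]
  symm
  refine Nat.card_congr (Equiv.ofBijective (fun O => Quot.mk _ (f O)) ⟨?_, ?_⟩)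
  · intro O O' h
    have hs : ∀ O x, (∀ y, ¬ inducedOrientation G (f O) y x) → x = q := by
      intro O x hx
      rw [hf] at hx
      exact Finset.mem_singleton.1 ((((hmem O).1 O.2).mem_iff x).2 hx)
    refine Subtype.ext ?_
    rw [← hf O, ← hf O']
    exact inducedOrientation_eq_of_eqvGen (Quot.eqvGen_exact h) (hs O) (hs O')
  · rintro ⟨σ⟩
    obtain ⟨τ, h1, h2⟩ := exists_eqvGen_unique_source hG q σ
    have hO := isAcyclicOrientation_inducedOrientation G τ {q} (by simpa using h2)
    refine ⟨⟨_, (hmem _).2 hO⟩, Quot.eqvGen_sound ?_⟩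
    exact (eqvGen_of_inducedOrientation_eq _ _ (hf _)).trans _ _ _ h1.symm

/-- The Möbius function does not depend on the choice of the finiteness and decidability data. -/
lemma mu_eq_mu_of_instances {α : Type*} [Preorder α] (l₁ l₂ : LocallyFiniteOrder α)
    (d₁ d₂ : DecidableEq α) (a b : α) :
    @IncidenceAlgebra.mu ℤ α _ _ _ l₁ d₁ a b = @IncidenceAlgebra.mu ℤ α _ _ _ l₂ d₂ a b := by
  rw [Subsingleton.elim l₁ l₂, Subsingleton.elim d₁ d₂]

/-- for a finite connected simple graph `G` on `d` vertices, the Möbius invariant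
`μ(G)` equals the number of equivalence classes of linear orderings of the vertices under the
equivalence relation generated by commuting consecutive non-adjacent vertices and by cyclic
shifts. -/
theorem mobiusInvariant_eq_card_ordering_classes (G : SimpleGraph V) (hG : G.Connected) :
    mobiusInvariant G = (Nat.card (Quot (orderingStep G)) : ℤ) := by
  obtain ⟨q⟩ := hG.nonempty
  have hbot : ∀ B ∈ (⊥ : Setoid V).classes, (G.induce B).Connected :=
    conn_iff.2 fun x y (hxy : x = y) => hxy ▸ .refl
  have htop : ∀ B ∈ (⊤ : Setoid V).classes, (G.induce B).Connected :=
    conn_iff.2 fun x y _ => Relation.ReflTransGen.mono (fun _ _ h => ⟨h, trivial⟩) _ _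
      ((SimpleGraph.reachable_iff_reflTransGen x y).1 (hG.preconnected x y))
  have hR : IsTransversal (⊤ : Setoid V) {q} :=
    ⟨fun x => ⟨q, Finset.mem_singleton_self q, trivial⟩, by simp⟩
  have hmob : ∀ b c : ConnPartition G, b.1 = ⊥ → c.1 = ⊤ →
      mobiusInvariant G = |IncidenceAlgebra.mu ℤ b c| := by
    rintro ⟨b, hb⟩ ⟨c, hc⟩ rfl rfl
    rw [mobiusInvariant, dif_pos ⟨hbot, htop⟩]
    exact congrArg abs (mu_eq_mu_of_instances (α := ConnPartition G) _ _ _ _ _ _)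
  rw [hmob ⟨⊥, hbot⟩ ⟨⊤, htop⟩ rfl rfl,
    mu_eq_card_acyclicOrientations ⟨⊥, hbot⟩ rfl ⟨⊤, htop⟩ {q} hR, card_quot_orderingStep hG q,
    abs_mul, abs_pow, abs_neg, abs_one, one_pow, one_mul, Nat.abs_cast]
end
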